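/- Let π and π̃ be two policies of a finite Markov decision process, let α = D_TV^max(π, π̃), and let f : S → ℝ satisfy |f(s)| ≤ f_max for all states s. Then for every time step t ≥ 0, the difference of expectations of f under the time-t state distributions of the two policies is bounded: |Σ_s (μ_t^{π̃}(s) − μ_t^π(s)) f(s)| ≤ 2 f_max · t · α. -/

import Mathlib

open Finset

noncomputable section

/-- Action-value function `Q^π(s,a) = r(s,a) + γ ∑_{s'} P(s'|s,a) V(s')`
(built from a given value function `V`). -/
def mdpQ {S A : Type*} [Fintype S] (P : S → A → S → ℝ) (r : S → A → ℝ) (γ : ℝ)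
    (V : S → ℝ) (s : S) (a : A) : ℝ :=
  r s a + γ * ∑ s', P s a s' * V s'

/-- Advantage function `A^π(s,a) = Q^π(s,a) − V^π(s)`. -/
def mdpAdv {S A : Type*} [Fintype S] (P : S → A → S → ℝ) (r : S → A → ℝ) (γ : ℝ)
    (V : S → ℝ) (s : S) (a : A) : ℝ :=
  mdpQ P r γ V s a - V s

/-- `V` solves the Bellman equation for policy `π`. -/
def IsBellman {S A : Type*} [Fintype S] [Fintype A] (P : S → A → S → ℝ)
    (r : S → A → ℝ) (γ : ℝ) (π : S → A → ℝ) (V : S → ℝ) : Prop :=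
  ∀ s, V s = ∑ a, π s a * (r s a + γ * ∑ s', P s a s' * V s')

/-- Policy performance `η(π) = ∑_s ρ₀(s) V^π(s)`. -/
def perf {S : Type*} [Fintype S] (ρ₀ V : S → ℝ) : ℝ := ∑ s, ρ₀ s * V s

/-- Time-`t` state distribution `μ_t^π`. -/
def stateDist {S A : Type*} [Fintype S] [Fintype A] (P : S → A → S → ℝ)
    (π : S → A → ℝ) (ρ₀ : S → ℝ) : ℕ → S → ℝ
  | 0 => ρ₀
  | t + 1 => fun s' => ∑ s, ∑ a, stateDist P π ρ₀ t s * π s a * P s a s'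

/-- Discounted state visitation frequency `ρ_π(s) = (1−γ) ∑_t γ^t μ_t^π(s)`. -/
def visitFreq {S A : Type*} [Fintype S] [Fintype A] (P : S → A → S → ℝ)
    (π : S → A → ℝ) (ρ₀ : S → ℝ) (γ : ℝ) (s : S) : ℝ :=
  (1 - γ) * ∑' t : ℕ, γ ^ t * stateDist P π ρ₀ t s

/-- Surrogate objective `L_π(π̃)`, built from the value function `V` of `π`. -/
def surrogate {S A : Type*} [Fintype S] [Fintype A] (P : S → A → S → ℝ)
    (r : S → A → ℝ) (γ : ℝ) (ρ₀ : S → ℝ) (π : S → A → ℝ) (V : S → ℝ)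
    (π' : S → A → ℝ) : ℝ :=
  perf ρ₀ V +
    (1 / (1 - γ)) * ∑ s, visitFreq P π ρ₀ γ s * ∑ a, π' s a * mdpAdv P r γ V s a

/-- Total variation distance between pmfs on a finite set. -/
def dTV {X : Type*} [Fintype X] (p q : X → ℝ) : ℝ := (1 / 2) * ∑ x, |p x - q x|

/-- `D_TV^max(π,π̃) = max_s D_TV(π(·|s) ‖ π̃(·|s))`. -/
def dTVmax {S A : Type*} [Fintype S] [Fintype A] (π π' : S → A → ℝ) : ℝ :=
  ⨆ s : S, dTV (π s) (π' s)

/-!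
Pushing forward along a kernel contracts the `ℓ¹` norm. Writing `K_π` for the state kernel induced
by `π`, one step of the two chains differs by
`μ̃ K_π̃ - μ K_π = (μ̃ - μ) K_π̃ + μ (K_π̃ - K_π)`:
in total variation the first term is no larger than the current discrepancy and the second costs at
most one `D_TV^max(π, π̃)`, so the distance between the chains grows at most linearly in time.
-/

section TotalVariation

open Matrix

variable {X Y : Type*} [Fintype X] [Fintype Y]

lemma sum_abs_eq_one_of_nonneg {p : X → ℝ} (hp0 : ∀ x, 0 ≤ p x) (hp1 : ∑ x, p x = 1) :
    ∑ x, |p x| = 1 := by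
  simpa only [abs_of_nonneg (hp0 _)] using hp1

lemma sum_abs_vecMul_le (p : X → ℝ) (K : Matrix X Y ℝ) {c : ℝ} (hK : ∀ x, ∑ y, |K x y| ≤ c) :
    ∑ y, |(p ᵥ* K) y| ≤ (∑ x, |p x|) * c :=
  calc ∑ y, |(p ᵥ* K) y|
      ≤ ∑ y, ∑ x, |p x| * |K x y| := by
        gcongr with y
        simpa only [vecMul, dotProduct, abs_mul] using
          abs_sum_le_sum_abs (fun x => p x * K x y) univ
    _ = ∑ x, |p x| * ∑ y, |K x y| := by
        rw [sum_comm]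
        simp only [mul_sum]
    _ ≤ ∑ x, |p x| * c := by
        gcongr with x
        exact hK x
    _ = (∑ x, |p x|) * c := (sum_mul ..).symm

lemma sum_abs_sub_eq_two_mul_dTV (p q : X → ℝ) : ∑ x, |(p - q) x| = 2 * dTV p q := by
  simp only [dTV, Pi.sub_apply]
  ring

lemma dTV_self (p : X → ℝ) : dTV p p = 0 := by
  simp [dTV]

lemma dTV_comm (p q : X → ℝ) : dTV p q = dTV q p := by
  simp only [dTV, abs_sub_comm]

lemma dTV_nonneg (p q : X → ℝ) : 0 ≤ dTV p q := by
  unfold dTV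
  positivity

lemma dTV_triangle (p q r : X → ℝ) : dTV p r ≤ dTV p q + dTV q r := by
  unfold dTV
  rw [← mul_add, ← sum_add_distrib]
  gcongr with x
  exact abs_sub_le ..

lemma abs_sum_sub_mul_le_dTV (p q : X → ℝ) {f : X → ℝ} {c : ℝ} (hf : ∀ x, |f x| ≤ c) :
    |∑ x, (p x - q x) * f x| ≤ 2 * c * dTV p q :=
  calc |∑ x, (p x - q x) * f x|
      ≤ ∑ x, |p x - q x| * |f x| := by
        simpa only [abs_mul] using abs_sum_le_sum_abs (fun x => (p x - q x) * f x) univ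
    _ ≤ ∑ x, |p x - q x| * c := by
        gcongr with x
        exact hf x
    _ = 2 * c * dTV p q := by
        rw [← sum_mul, dTV]
        ring

lemma dTV_vecMul_left_le (p q : X → ℝ) (K : Matrix X Y ℝ) {c : ℝ}
    (hK : ∀ x, ∑ y, |K x y| ≤ c) : dTV (p ᵥ* K) (q ᵥ* K) ≤ dTV p q * c := by
  have h := sum_abs_vecMul_le (p - q) K hK
  rw [sub_vecMul, sum_abs_sub_eq_two_mul_dTV, sum_abs_sub_eq_two_mul_dTV] at h
  linarith

lemma dTV_vecMul_right_le (p : X → ℝ) (K L : Matrix X Y ℝ) {c : ℝ}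
    (hKL : ∀ x, dTV (K x) (L x) ≤ c) : dTV (p ᵥ* K) (p ᵥ* L) ≤ (∑ x, |p x|) * c := by
  have hrow (x : X) : ∑ y, |(K - L) x y| ≤ 2 * c :=
    (sum_abs_sub_eq_two_mul_dTV (K x) (L x)).trans_le (by linarith [hKL x])
  have h := sum_abs_vecMul_le p (K - L) hrow
  rw [vecMul_sub, sum_abs_sub_eq_two_mul_dTV] at h
  linarith

end TotalVariation

section Policies

open Matrix

variable {S A : Type*} [Fintype S] [Fintype A]

lemma dTVmax_nonneg (π π' : S → A → ℝ) : 0 ≤ dTVmax π π' :=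
  Real.iSup_nonneg fun s => dTV_nonneg (π s) (π' s)

lemma dTV_le_dTVmax (π π' : S → A → ℝ) (s : S) : dTV (π s) (π' s) ≤ dTVmax π π' :=
  le_ciSup (f := fun s => dTV (π s) (π' s)) (Set.finite_range _).bddAbove s

/-- The state-to-state transition matrix `K_π(s, s') = ∑_a π(a|s) P(s'|s,a)` of the Markov chain
obtained by running the policy `π`; row `s` is the law `π s` pushed forward along `P s`. -/
def policyKernel (P : S → A → S → ℝ) (π : S → A → ℝ) : Matrix S S ℝ :=
  fun s => π s ᵥ* P s

variable {P : S → A → S → ℝ} {π π' : S → A → ℝ}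

lemma stateDist_succ (P : S → A → S → ℝ) (π : S → A → ℝ) (ρ₀ : S → ℝ) (t : ℕ) :
    stateDist P π ρ₀ (t + 1) = stateDist P π ρ₀ t ᵥ* policyKernel P π := by
  ext s'
  simp only [stateDist, policyKernel, vecMul, dotProduct, mul_sum, mul_assoc]

lemma sum_abs_policyKernel_le_one (hP : ∀ s a, ∑ s', |P s a s'| ≤ 1)
    (hπ : ∀ s, ∑ a, |π s a| ≤ 1) (s : S) : ∑ s', |policyKernel P π s s'| ≤ 1 :=
  calc ∑ s', |policyKernel P π s s'|
      ≤ (∑ a, |π s a|) * 1 := sum_abs_vecMul_le (π s) (P s) (hP s)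
    _ ≤ 1 := by simpa only [mul_one] using hπ s

lemma dTV_policyKernel_le_dTVmax (hP : ∀ s a, ∑ s', |P s a s'| ≤ 1) (π π' : S → A → ℝ) (s : S) :
    dTV (policyKernel P π s) (policyKernel P π' s) ≤ dTVmax π π' :=
  calc dTV (policyKernel P π s) (policyKernel P π' s)
      ≤ dTV (π s) (π' s) * 1 := dTV_vecMul_left_le (π s) (π' s) (P s) (hP s)
    _ ≤ dTVmax π π' := by simpa only [mul_one] using dTV_le_dTVmax π π' s

lemma sum_abs_stateDist_le (hP : ∀ s a, ∑ s', |P s a s'| ≤ 1) (hπ : ∀ s, ∑ a, |π s a| ≤ 1)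
    (ρ₀ : S → ℝ) (t : ℕ) : ∑ s, |stateDist P π ρ₀ t s| ≤ ∑ s, |ρ₀ s| := by
  induction t with
  | zero => rfl
  | succ t ih =>
    calc ∑ s, |stateDist P π ρ₀ (t + 1) s|
        ≤ (∑ s, |stateDist P π ρ₀ t s|) * 1 := by
          rw [stateDist_succ]
          exact sum_abs_vecMul_le _ _ (sum_abs_policyKernel_le_one hP hπ)
      _ ≤ ∑ s, |ρ₀ s| := by simpa only [mul_one] using ih

lemma dTV_stateDist_succ_le (hP : ∀ s a, ∑ s', |P s a s'| ≤ 1) (hπ : ∀ s, ∑ a, |π s a| ≤ 1)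
    (hπ' : ∀ s, ∑ a, |π' s a| ≤ 1) (ρ₀ : S → ℝ) (t : ℕ) :
    dTV (stateDist P π ρ₀ (t + 1)) (stateDist P π' ρ₀ (t + 1)) ≤
      dTV (stateDist P π ρ₀ t) (stateDist P π' ρ₀ t) + (∑ s, |ρ₀ s|) * dTVmax π π' := by
  set μ := stateDist P π ρ₀ t
  set μ' := stateDist P π' ρ₀ t
  set K := policyKernel P π
  set K' := policyKernel P π'
  have hdist : dTV (μ ᵥ* K) (μ' ᵥ* K) ≤ dTV μ μ' * 1 :=
    dTV_vecMul_left_le μ μ' K (sum_abs_policyKernel_le_one hP hπ)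
  have hkernel : dTV (μ' ᵥ* K) (μ' ᵥ* K') ≤ (∑ s, |μ' s|) * dTVmax π π' :=
    dTV_vecMul_right_le μ' K K' (dTV_policyKernel_le_dTVmax hP π π')
  have hmass : (∑ s, |μ' s|) * dTVmax π π' ≤ (∑ s, |ρ₀ s|) * dTVmax π π' :=
    mul_le_mul_of_nonneg_right (sum_abs_stateDist_le hP hπ' ρ₀ t) (dTVmax_nonneg π π')
  rw [stateDist_succ, stateDist_succ]
  linarith [dTV_triangle (μ ᵥ* K) (μ' ᵥ* K) (μ' ᵥ* K')]

lemma dTV_stateDist_le (hP : ∀ s a, ∑ s', |P s a s'| ≤ 1) (hπ : ∀ s, ∑ a, |π s a| ≤ 1)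
    (hπ' : ∀ s, ∑ a, |π' s a| ≤ 1) (ρ₀ : S → ℝ) (t : ℕ) :
    dTV (stateDist P π ρ₀ t) (stateDist P π' ρ₀ t) ≤ t * ((∑ s, |ρ₀ s|) * dTVmax π π') := by
  induction t with
  | zero => simp [stateDist, dTV_self]
  | succ t ih =>
    push_cast
    linarith [dTV_stateDist_succ_le hP hπ hπ' ρ₀ t]

theorem expectation_difference_bound_general [Nonempty S]
    (hP : ∀ s a, ∑ s', |P s a s'| ≤ 1) (ρ₀ : S → ℝ)
    (hπ : ∀ s, ∑ a, |π s a| ≤ 1) (hπ' : ∀ s, ∑ a, |π' s a| ≤ 1)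
    {f : S → ℝ} {fmax : ℝ} (hf : ∀ s, |f s| ≤ fmax) (t : ℕ) :
    |∑ s, (stateDist P π' ρ₀ t s - stateDist P π ρ₀ t s) * f s| ≤
      2 * fmax * t * dTVmax π π' * ∑ s, |ρ₀ s| := by
  have hfmax : 0 ≤ fmax := (abs_nonneg _).trans (hf (Classical.arbitrary S))
  calc |∑ s, (stateDist P π' ρ₀ t s - stateDist P π ρ₀ t s) * f s|
      ≤ 2 * fmax * dTV (stateDist P π ρ₀ t) (stateDist P π' ρ₀ t) := by
        rw [dTV_comm]
        exact abs_sum_sub_mul_le_dTV _ _ hf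
    _ ≤ 2 * fmax * (t * ((∑ s, |ρ₀ s|) * dTVmax π π')) := by
        gcongr
        exact dTV_stateDist_le hP hπ hπ' ρ₀ t
    _ = 2 * fmax * t * dTVmax π π' * ∑ s, |ρ₀ s| := by ring

end Policies

/-- for two policies `π` and `π̃` with `α = D_TV^max(π,π̃)` and any
`f : S → ℝ` with `|f(s)| ≤ f_max`, the difference of expectations of `f` under
the time-`t` state distributions is bounded by `2 f_max · t · α`. -/
theorem expectation_difference_bound
    {S A : Type*} [Fintype S] [Fintype A] [Nonempty S] [Nonempty A]
    (P : S → A → S → ℝ) (ρ₀ : S → ℝ)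
    (hP0 : ∀ s a s', 0 ≤ P s a s') (hP1 : ∀ s a, ∑ s', P s a s' = 1)
    (hρ0 : ∀ s, 0 ≤ ρ₀ s) (hρ1 : ∑ s, ρ₀ s = 1)
    (π πt : S → A → ℝ)
    (hπ0 : ∀ s a, 0 ≤ π s a) (hπ1 : ∀ s, ∑ a, π s a = 1)
    (hπt0 : ∀ s a, 0 ≤ πt s a) (hπt1 : ∀ s, ∑ a, πt s a = 1)
    (α : ℝ) (hα : α = dTVmax π πt)
    (f : S → ℝ) (fmax : ℝ) (hf : ∀ s, |f s| ≤ fmax) :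
    ∀ t : ℕ,
      |∑ s, (stateDist P πt ρ₀ t s - stateDist P π ρ₀ t s) * f s| ≤
        2 * fmax * t * α := by
  intro t
  simpa only [hα, sum_abs_eq_one_of_nonneg hρ0 hρ1, mul_one] using
    expectation_difference_bound_general
      (fun s a => (sum_abs_eq_one_of_nonneg (hP0 s a) (hP1 s a)).le) ρ₀
      (fun s => (sum_abs_eq_one_of_nonneg (hπ0 s) (hπ1 s)).le)
      (fun s => (sum_abs_eq_one_of_nonneg (hπt0 s) (hπt1 s)).le) hf t
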